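/- Let k ≥ 2 be an integer and let n = 2k. Let V_n = X_{(0,k)} ∪ X_{(k−1,1)} ∪ W_k and let N_n be the niche graph of the doubly partial order associated with V_n. Then the n vertices consisting of the integer points of W_k together with (0,k) and (k−1,1) form a cycle of length n as an induced subgraph of N_n; explicitly, the cyclic sequence (k−2,1), (k−3,2), …, (0,k−1), (0,k), (1,k), (2,k−1), …, (k−1,2), (k−1,1) is an induced cycle of N_n. -/

import Mathlib

/-!
All `2k` cycle vertices are integer points of the box `[0, k-1] × [1, k]`. For an integer point
`(s, t)` of that box, `V_n` has a point strictly above `(s, t)` iff `s + t ≤ k`, and a point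
strictly below it iff `s + t ≥ k`. The necessity is obtained by rounding each point of `V_n`
(`exists_third_of_mem`), the sufficiency by the points `(s ± 1/3, k - s ± 1/3)`, replaced by the
outer points of `X_{(0,k)}` and `X_{(k-1,1)}` when `s = 0` or `s = k - 1` (`exists_above`,
`exists_below`). Hence two distinct cycle vertices are adjacent iff their coordinatewise maximum
has coordinate sum at most `k` or their coordinatewise minimum has coordinate sum at least `k`
(`adj_iff`). Along the cycle the coordinate sums are `k - 1` (lower chain), `k` at `(0, k)`,
`k + 1` (upper chain) and `k` at `(k-1, 1)`, so this criterion singles out consecutive vertices by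
linear integer arithmetic.
-/

open scoped Classical

/-- `x ≺ y` iff both coordinates of `x` are strictly smaller. -/
def prec (x y : ℝ × ℝ) : Prop := x.1 < y.1 ∧ x.2 < y.2

/-- Adjacency in the niche graph of the doubly partial order associated with `V`:
two distinct vertices of `V` are adjacent iff they have a common prey or a common
predator in `V`. -/
def nicheAdj (V : Finset (ℝ × ℝ)) (u v : ℝ × ℝ) : Prop :=
  u ∈ V ∧ v ∈ V ∧ u ≠ v ∧
    ((∃ a ∈ V, prec a u ∧ prec a v) ∨ (∃ a ∈ V, prec u a ∧ prec v a))

/-- `X_{(i,j)} = {(i-1,j-1), (i,j), (i+1,j+1)}`. -/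
noncomputable def Xset (p : ℝ × ℝ) : Finset (ℝ × ℝ) :=
  {(p.1 - 1, p.2 - 1), p, (p.1 + 1, p.2 + 1)}

/-- The set `W_k`: integer points `(i, k-1-i)` and `(i+1, k-i)` for
`i = 0, …, k-2`, together with the non-integer points `(i-1/3, k-i-1/3)` and
`(i+1/3, k-i+1/3)` for `i = 1, …, k-2`. -/
noncomputable def Wk (k : ℕ) : Finset (ℝ × ℝ) :=
  ((Finset.range (k - 1)).biUnion fun i =>
    {((i : ℝ), (k : ℝ) - 1 - i), ((i : ℝ) + 1, (k : ℝ) - i)}) ∪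
  ((Finset.Icc 1 (k - 2)).biUnion fun i =>
    {((i : ℝ) - 1/3, (k : ℝ) - i - 1/3), ((i : ℝ) + 1/3, (k : ℝ) - i + 1/3)})

/-- The sequence `A_k` (0-indexed): for `j = 0, …, k-2` the point
`(k-2-j, j+1)` (i.e. `(i, k-1-i)` for `i = k-2` down to `0`), then `(0, k)` at
position `k-1`, then for `j = k, …, 2k-2` the point `(j-k+1, 2k-j)`
(i.e. `(i+1, k-i)` for `i = 0, …, k-2`). -/
noncomputable def Aseq (k : ℕ) (j : ℕ) : ℝ × ℝ :=
  if j < k - 1 then ((k : ℝ) - 2 - j, (j : ℝ) + 1)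
  else if j = k - 1 then (0, (k : ℝ))
  else ((j : ℝ) - k + 1, 2 * (k : ℝ) - j)

/-- The cyclic sequence of `2k` vertices: the `2k-1` points of `A_k` followed by
`(k-1, 1)`. -/
noncomputable def cycSeqEven (k : ℕ) (i : ZMod (2 * k)) : ℝ × ℝ :=
  if i.val < 2 * k - 1 then Aseq k i.val else ((k : ℝ) - 1, 1)

/-- The vertex set `V_n` for `n = 2k`. -/
noncomputable abbrev vset (k : ℕ) : Finset (ℝ × ℝ) :=
  Xset (0, (k : ℝ)) ∪ Xset ((k : ℝ) - 1, 1) ∪ Wk k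

/-- First coordinate of the `j`-th cycle vertex, `0 ≤ j < 2k`. -/
def cx (k j : ℕ) : ℤ :=
  if j + 1 < k then (k : ℤ) - 2 - j else if j + 1 = 2 * k then (k : ℤ) - 1 else (j : ℤ) - k + 1

/-- Second coordinate of the `j`-th cycle vertex, `0 ≤ j < 2k`. -/
def cy (k j : ℕ) : ℤ := if j < k then (j : ℤ) + 1 else 2 * (k : ℤ) - j

theorem mem_vset {k : ℕ} {a : ℝ × ℝ} : a ∈ vset k ↔
    (a = (-1, (k : ℝ) - 1) ∨ a = (0, (k : ℝ)) ∨ a = (1, (k : ℝ) + 1)) ∨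
    (a = ((k : ℝ) - 2, 0) ∨ a = ((k : ℝ) - 1, 1) ∨ a = ((k : ℝ), 2)) ∨
    (∃ i : ℕ, i < k - 1 ∧ (a = ((i : ℝ), (k : ℝ) - 1 - i) ∨ a = ((i : ℝ) + 1, (k : ℝ) - i))) ∨
    (∃ i : ℕ, (1 ≤ i ∧ i ≤ k - 2) ∧
      (a = ((i : ℝ) - 1/3, (k : ℝ) - i - 1/3) ∨ a = ((i : ℝ) + 1/3, (k : ℝ) - i + 1/3))) := by
  have e1 : (k : ℝ) - 1 - 1 = k - 2 := by ring
  have e2 : (1 : ℝ) + 1 = 2 := by norm_num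
  simp only [vset, Xset, Wk, Finset.mem_union, Finset.mem_insert, Finset.mem_singleton,
    Finset.mem_biUnion, Finset.mem_range, Finset.mem_Icc, zero_sub, zero_add, sub_self,
    sub_add_cancel, e1, e2, or_assoc]

/-- Every point of `V_n` has coordinates in `ℤ/3`; the largest integer point strictly below it has
coordinate sum at most `k`, and the smallest integer point strictly above it has coordinate sum at
least `k`. Here `(A + 2) / 3` and `A / 3` are the ceiling and the floor of the first coordinate. -/
theorem exists_third_of_mem {k : ℕ} {a : ℝ × ℝ} (ha : a ∈ vset k) :
    ∃ A B : ℤ, 3 * a.1 = A ∧ 3 * a.2 = B ∧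
      (A + 2) / 3 + (B + 2) / 3 ≤ k + 2 ∧ (k : ℤ) - 2 ≤ A / 3 + B / 3 := by
  rw [mem_vset] at ha
  rcases ha with (rfl | rfl | rfl) | (rfl | rfl | rfl) | ⟨i, hi, rfl | rfl⟩ | ⟨i, hi, rfl | rfl⟩
  · exact ⟨-3, 3 * k - 3, by push_cast; ring, by push_cast; ring, by omega, by omega⟩
  · exact ⟨0, 3 * k, by push_cast; ring, by push_cast; ring, by omega, by omega⟩
  · exact ⟨3, 3 * k + 3, by push_cast; ring, by push_cast; ring, by omega, by omega⟩
  · exact ⟨3 * k - 6, 0, by push_cast; ring, by push_cast; ring, by omega, by omega⟩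
  · exact ⟨3 * k - 3, 3, by push_cast; ring, by push_cast; ring, by omega, by omega⟩
  · exact ⟨3 * k, 6, by push_cast; ring, by push_cast; ring, by omega, by omega⟩
  · exact ⟨3 * i, 3 * k - 3 - 3 * i, by push_cast; ring, by push_cast; ring, by omega, by omega⟩
  · exact ⟨3 * i + 3, 3 * k - 3 * i, by push_cast; ring, by push_cast; ring, by omega, by omega⟩
  · exact ⟨3 * i - 1, 3 * k - 3 * i - 1, by push_cast; ring, by push_cast; ring, by omega,
      by omega⟩
  · exact ⟨3 * i + 1, 3 * k - 3 * i + 1, by push_cast; ring, by push_cast; ring, by omega,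
      by omega⟩

theorem sum_le_of_above {k : ℕ} {a : ℝ × ℝ} (ha : a ∈ vset k) {s t : ℤ}
    (h : prec ((s : ℝ), (t : ℝ)) a) : s + t ≤ k := by
  obtain ⟨A, B, hA, hB, h1, -⟩ := exists_third_of_mem ha
  obtain ⟨hs, ht⟩ := h
  have hs' : 3 * s < A := by
    have : (3 * s : ℝ) < A := by rw [← hA]; simp only at hs; linarith
    exact_mod_cast this
  have ht' : 3 * t < B := by
    have : (3 * t : ℝ) < B := by rw [← hB]; simp only at ht; linarith
    exact_mod_cast this
  omega

theorem le_sum_of_below {k : ℕ} {a : ℝ × ℝ} (ha : a ∈ vset k) {s t : ℤ}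
    (h : prec a ((s : ℝ), (t : ℝ))) : (k : ℤ) ≤ s + t := by
  obtain ⟨A, B, hA, hB, -, h1⟩ := exists_third_of_mem ha
  obtain ⟨hs, ht⟩ := h
  have hs' : A < 3 * s := by
    have : (A : ℝ) < 3 * s := by rw [← hA]; simp only at hs; linarith
    exact_mod_cast this
  have ht' : B < 3 * t := by
    have : (B : ℝ) < 3 * t := by rw [← hB]; simp only at ht; linarith
    exact_mod_cast this
  omega

theorem exists_above {k : ℕ} {s t : ℤ} (hs : 0 ≤ s) (ht : 1 ≤ t) (h : s + t ≤ k) :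
    ∃ a ∈ vset k, prec ((s : ℝ), (t : ℝ)) a := by
  lift s to ℕ using hs
  have hR : (s : ℝ) + t ≤ k := by exact_mod_cast h
  have htR : (1 : ℝ) ≤ t := by exact_mod_cast ht
  rcases Nat.eq_zero_or_pos s with rfl | hpos
  · refine ⟨(1, (k : ℝ) + 1), mem_vset.2 (by simp), ?_⟩
    constructor <;> push_cast at * <;> linarith
  by_cases hlast : s = k - 1
  · refine ⟨((k : ℝ), 2), mem_vset.2 (by simp), ?_⟩
    have ht1 : t = 1 := by omega
    subst ht1
    constructor <;> push_cast at * <;> linarith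
  · refine ⟨((s : ℝ) + 1/3, (k : ℝ) - s + 1/3),
      mem_vset.2 (.inr (.inr (.inr ⟨s, by omega, .inr rfl⟩))), ?_⟩
    constructor <;> push_cast at * <;> linarith

theorem exists_below {k : ℕ} {s t : ℤ} (hs : s + 1 ≤ k) (ht : t ≤ k) (h : (k : ℤ) ≤ s + t) :
    ∃ a ∈ vset k, prec a ((s : ℝ), (t : ℝ)) := by
  lift s to ℕ using by omega
  have hR : (k : ℝ) ≤ s + t := by exact_mod_cast h
  have hsR : (s : ℝ) + 1 ≤ k := by exact_mod_cast hs
  rcases Nat.eq_zero_or_pos s with rfl | hpos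
  · refine ⟨(-1, (k : ℝ) - 1), mem_vset.2 (by simp), ?_⟩
    constructor <;> push_cast at * <;> linarith
  by_cases hlast : s = k - 1
  · refine ⟨((k : ℝ) - 2, 0), mem_vset.2 (by simp), ?_⟩
    have hk : (s : ℝ) + 1 = k := by
      have : s + 1 = k := by omega
      exact_mod_cast this
    constructor <;> push_cast at * <;> linarith
  · refine ⟨((s : ℝ) - 1/3, (k : ℝ) - s - 1/3),
      mem_vset.2 (.inr (.inr (.inr ⟨s, by omega, .inl rfl⟩))), ?_⟩
    constructor <;> push_cast at * <;> linarith

/-- Adjacency of two distinct integer vertices lying in the box `[0, k-1] × [1, k]`. -/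
theorem adj_iff {k : ℕ} {p q p' q' : ℤ} (hu : ((p : ℝ), (q : ℝ)) ∈ vset k)
    (hv : ((p' : ℝ), (q' : ℝ)) ∈ vset k) (hne : ((p : ℝ), (q : ℝ)) ≠ ((p' : ℝ), (q' : ℝ)))
    (hp : 0 ≤ p ∧ p + 1 ≤ k) (hq : 1 ≤ q ∧ q ≤ k)
    (hp' : 0 ≤ p' ∧ p' + 1 ≤ k) (hq' : 1 ≤ q' ∧ q' ≤ k) :
    nicheAdj (vset k) ((p : ℝ), (q : ℝ)) ((p' : ℝ), (q' : ℝ)) ↔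
      (k : ℤ) ≤ min p p' + min q q' ∨ max p p' + max q q' ≤ k := by
  have hbelow : ∀ a : ℝ × ℝ, prec a ((p : ℝ), (q : ℝ)) ∧ prec a ((p' : ℝ), (q' : ℝ)) ↔
      prec a (((min p p' : ℤ) : ℝ), ((min q q' : ℤ) : ℝ)) := by
    intro a; simp only [prec, Int.cast_min, lt_min_iff]; tauto
  have habove : ∀ a : ℝ × ℝ, prec ((p : ℝ), (q : ℝ)) a ∧ prec ((p' : ℝ), (q' : ℝ)) a ↔
      prec (((max p p' : ℤ) : ℝ), ((max q q' : ℤ) : ℝ)) a := by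
    intro a; simp only [prec, Int.cast_max, max_lt_iff]; tauto
  simp only [nicheAdj, hu, hv, hne, ne_eq, not_false_eq_true, true_and, hbelow, habove]
  refine or_congr ⟨?_, fun h => exists_below (by omega) (by omega) h⟩
    ⟨?_, fun h => exists_above (by omega) (by omega) h⟩
  · rintro ⟨a, ha, h⟩; exact le_sum_of_below ha h
  · rintro ⟨a, ha, h⟩; exact sum_le_of_above ha h

theorem cycSeqEven_eq {k : ℕ} (hk : 2 ≤ k) (i : ZMod (2 * k)) :
    cycSeqEven k i = ((cx k i.val : ℝ), (cy k i.val : ℝ)) := by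
  have : NeZero (2 * k) := ⟨by omega⟩
  have hi := ZMod.val_lt i
  generalize hj : i.val = j at hi
  simp only [cycSeqEven, Aseq, cx, cy, hj]
  by_cases h1 : j + 1 < k
  · rw [if_pos (by omega), if_pos (by omega), if_pos h1, if_pos (by omega)]
    push_cast; rfl
  by_cases h2 : j + 1 = 2 * k
  · have h2R : (j : ℝ) + 1 = 2 * k := by exact_mod_cast h2
    rw [if_neg (by omega), if_neg h1, if_pos h2, if_neg (by omega)]
    push_cast
    exact Prod.ext rfl (by simp only; linarith)
  rw [if_pos (by omega), if_neg (by omega), if_neg h1, if_neg h2]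
  by_cases h3 : j = k - 1
  · have h3R : (j : ℝ) + 1 = k := by
      have : j + 1 = k := by omega
      exact_mod_cast this
    rw [if_pos h3, if_pos (by omega)]
    push_cast
    exact Prod.ext (by simp only; linarith) (by simp only; linarith)
  · rw [if_neg h3, if_neg (by omega)]
    push_cast; rfl

theorem cycSeqEven_mem {k : ℕ} (hk : 2 ≤ k) (i : ZMod (2 * k)) : cycSeqEven k i ∈ vset k := by
  have : NeZero (2 * k) := ⟨by omega⟩
  have hi := ZMod.val_lt i
  generalize hj : i.val = j at hi
  simp only [cycSeqEven, Aseq, hj]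
  rw [mem_vset]
  split_ifs with h0 h1 h2
  · refine .inr (.inr (.inl ⟨k - 2 - j, by omega, .inl ?_⟩))
    rw [Nat.cast_sub (by omega), Nat.cast_sub (by omega)]
    exact Prod.ext (by push_cast; ring) (by push_cast; ring)
  · simp
  · refine .inr (.inr (.inl ⟨j - k, by omega, .inr ?_⟩))
    rw [Nat.cast_sub (by omega)]
    exact Prod.ext (by push_cast; ring) (by push_cast; ring)
  · simp

theorem eq_add_one_iff {k : ℕ} (hk : 2 ≤ k) (i j : ZMod (2 * k)) :
    j = i + 1 ↔ j.val = i.val + 1 ∨ (j.val = 0 ∧ i.val + 1 = 2 * k) := by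
  have : NeZero (2 * k) := ⟨by omega⟩
  have : Fact (1 < 2 * k) := ⟨by omega⟩
  have hi := ZMod.val_lt i
  have hj := ZMod.val_lt j
  rw [← (ZMod.val_injective (2 * k)).eq_iff, ZMod.val_add, ZMod.val_one]
  rcases Nat.lt_or_ge (i.val + 1) (2 * k) with h | h
  · rw [Nat.mod_eq_of_lt h]; omega
  · have h' : i.val + 1 = 2 * k := by omega
    rw [h', Nat.mod_self]; omega

theorem cycSeqEven_injective {k : ℕ} (hk : 2 ≤ k) : Function.Injective (cycSeqEven k) := by
  have : NeZero (2 * k) := ⟨by omega⟩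
  intro i j h
  have hi := ZMod.val_lt i
  have hj := ZMod.val_lt j
  rw [cycSeqEven_eq hk, cycSeqEven_eq hk, Prod.mk.injEq, Int.cast_inj, Int.cast_inj] at h
  apply ZMod.val_injective
  obtain ⟨h1, h2⟩ := h
  unfold cx at h1
  unfold cy at h2
  split_ifs at h1 h2 <;> omega

/-- For `n = 2k` with `k ≥ 2`, the integer points of `W_k` together with `(0,k)`
and `(k-1,1)`, arranged as the cyclic sequence
`(k-2,1), …, (0,k-1), (0,k), (1,k), …, (k-1,2), (k-1,1)`, form an induced cycle
of length `n` in the niche graph `N_n` of the doubly partial order associated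
with `V_n = X_{(0,k)} ∪ X_{(k-1,1)} ∪ W_k`. -/
theorem stmt9 (k : ℕ) (hk : 2 ≤ k) :
    Function.Injective (cycSeqEven k) ∧
    (∀ i : ZMod (2 * k),
      cycSeqEven k i ∈ Xset (0, (k : ℝ)) ∪ Xset ((k : ℝ) - 1, 1) ∪ Wk k) ∧
    ∀ i j : ZMod (2 * k), i ≠ j →
      (nicheAdj (Xset (0, (k : ℝ)) ∪ Xset ((k : ℝ) - 1, 1) ∪ Wk k)
          (cycSeqEven k i) (cycSeqEven k j) ↔ j = i + 1 ∨ i = j + 1) := by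
  refine ⟨cycSeqEven_injective hk, cycSeqEven_mem hk, fun i j hij => ?_⟩
  have : NeZero (2 * k) := ⟨by omega⟩
  have hi := ZMod.val_lt i
  have hj := ZMod.val_lt j
  have hu := cycSeqEven_mem hk i
  have hv := cycSeqEven_mem hk j
  have hne := (cycSeqEven_injective hk).ne hij
  have hval : i.val ≠ j.val := (ZMod.val_injective (2 * k)).ne hij
  rw [cycSeqEven_eq hk] at hu hv hne
  rw [cycSeqEven_eq hk j] at hne
  rw [cycSeqEven_eq hk i, cycSeqEven_eq hk j, eq_add_one_iff hk, eq_add_one_iff hk]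
  have hbox : ∀ m < 2 * k, (0 ≤ cx k m ∧ cx k m + 1 ≤ k) ∧ (1 ≤ cy k m ∧ cy k m ≤ k) := by
    intro m hm
    unfold cx cy
    split_ifs <;> omega
  refine (adj_iff hu hv hne (hbox _ hi).1 (hbox _ hi).2 (hbox _ hj).1 (hbox _ hj).2).trans ?_
  generalize i.val = a at hi hval
  generalize j.val = b at hj hval
  unfold cx cy
  split_ifs <;> omega
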